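/- Let S be a d-set, n−1<d≤n, Q a cube centered in S with ℓ(Q) ≤ R, and P_{k,Q} the orthogonal projection of L^1(Q∩S) onto P_k with respect to ⟨f,g⟩=∫_{Q∩S} fg dH^d. Then there exist polynomials h_{Q,ν} ∈ P_k, |ν| ≤ k, with ‖h_{Q,ν}‖_{L^∞(Q)} ≤ C(S,R,n,k), such that for all f ∈ L^1(Q∩S): P_{k,Q} f(x) = ∑_{|ν|≤k} ( (1/H^d(Q∩S)) ∫_{Q∩S} f h_{Q,ν} dH^d ) (x−x_Q)^ν / ℓ(Q)^{|ν|}. -/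

import Mathlib

open Metric MeasureTheory
open scoped ENNReal

/-- Functions `ℝⁿ → ℝ` given by polynomials of degree at most `k`. -/
def degLE (n k : ℕ) : Set ((Fin n → ℝ) → ℝ) :=
  {P | ∃ q : MvPolynomial (Fin n) ℝ, q.totalDegree ≤ k ∧ ∀ x, P x = MvPolynomial.eval x q}

/-- The finite set of multi-indices `ν : Fin n → ℕ` with `|ν| = ∑ ν i ≤ k`. -/
def multiIdx (n k : ℕ) : Finset (Fin n → ℕ) :=
  (Fintype.piFinset fun _ : Fin n => Finset.range (k + 1)).filter fun ν => ∑ i, ν i ≤ k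

lemma mv_hasStrict {n : ℕ} (p : MvPolynomial (Fin n) ℝ) (x : Fin n → ℝ) :
    HasStrictFDerivAt (fun y : Fin n → ℝ => MvPolynomial.eval y p)
      (∑ i, MvPolynomial.eval x (MvPolynomial.pderiv i p) •
        (ContinuousLinearMap.proj i : (Fin n → ℝ) →L[ℝ] ℝ)) x := by
  induction p using MvPolynomial.induction_on with
  | C a => simpa using hasStrictFDerivAt_const (𝕜 := ℝ) a x
  | add p q hp hq =>
    have := hp.add hq
    simp only [map_add, add_smul, Finset.sum_add_distrib]
    exact this
  | mul_X p j hp =>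
    have h2 : HasStrictFDerivAt (fun y : Fin n → ℝ => y j)
      (ContinuousLinearMap.proj j : (Fin n → ℝ) →L[ℝ] ℝ) x :=
      (ContinuousLinearMap.proj j : (Fin n → ℝ) →L[ℝ] ℝ).hasStrictFDerivAt
    have h3 := hp.mul h2
    simp only [map_mul, MvPolynomial.eval_X]
    have e : (∑ i, MvPolynomial.eval x (MvPolynomial.pderiv i (p * MvPolynomial.X j)) •
        (ContinuousLinearMap.proj i : (Fin n → ℝ) →L[ℝ] ℝ)) =
        MvPolynomial.eval x p • (ContinuousLinearMap.proj j : (Fin n → ℝ) →L[ℝ] ℝ) +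
        x j • ∑ i, MvPolynomial.eval x (MvPolynomial.pderiv i p) •
        (ContinuousLinearMap.proj i : (Fin n → ℝ) →L[ℝ] ℝ) := by
      simp only [Derivation.leibniz, MvPolynomial.pderiv_X, smul_eq_mul, map_add, map_mul,
        MvPolynomial.eval_X, add_smul, Finset.sum_add_distrib, Finset.smul_sum, smul_smul]
      congr 1
      rw [Finset.sum_eq_single j]
      · simp
      · intro b _ hb
        simp [Pi.single_apply, hb.symm]
      · simp
    rw [e]
    exact h3

lemma mv_exists_pderiv {n : ℕ} (p : MvPolynomial (Fin n) ℝ) (hp : p.totalDegree ≠ 0) :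
    ∃ i, MvPolynomial.pderiv i p ≠ 0 ∧ (MvPolynomial.pderiv i p).totalDegree < p.totalDegree := by
  have h1 : ∃ m ∈ p.support, m ≠ 0 := by
    by_contra! h
    exact hp ((MvPolynomial.totalDegree_eq_zero_iff _ p).2 fun m hm i => by simp [h m hm])
  obtain ⟨m, hm, hm0⟩ := h1
  obtain ⟨i, hi⟩ := Finsupp.ne_iff.1 hm0
  have hi : m i ≠ 0 := by simpa using hi
  refine ⟨i, ?_, ?_⟩
  · intro h
    have := congrArg (MvPolynomial.coeff (m - Finsupp.single i 1)) h
    rw [MvPolynomial.coeff_pderiv] at this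
    have e : m - Finsupp.single i 1 + Finsupp.single i 1 = m := by
      ext j
      by_cases hj : j = i
      · subst hj; simp; omega
      · simp [Finsupp.single_apply, Ne.symm hj]
    rw [e] at this
    rw [MvPolynomial.mem_support_iff] at hm
    simp at this
    rcases this with h | h
    · exact hm h
    · have h0 : (0:ℝ) ≤ ((m i - 1 : ℕ) : ℝ) := Nat.cast_nonneg _
      linarith
  · rw [MvPolynomial.totalDegree, Finset.sup_lt_iff (by simpa using Nat.pos_of_ne_zero hp)]
    intro b hb
    rw [MvPolynomial.mem_support_iff, MvPolynomial.coeff_pderiv] at hb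
    have := MvPolynomial.le_totalDegree (MvPolynomial.mem_support_iff.2 (left_ne_zero_of_mul hb))
    rw [Finsupp.sum_add_index' (by simp) (by simp)] at this
    simp at this
    omega

lemma dimH_level {n : ℕ} (f : (Fin n → ℝ) → ℝ) (f' : (Fin n → ℝ) →L[ℝ] ℝ) (a : Fin n → ℝ)
    (hf : HasStrictFDerivAt f f' a) (hf' : f' ≠ 0) (ha : f a = 0) :
    ∃ U ∈ nhds a, dimH ({x | f x = 0} ∩ U) ≤ ((n - 1 : ℕ) : ℝ≥0∞) := by
  have hl : (f' : (Fin n → ℝ) →ₗ[ℝ] ℝ) ≠ 0 := fun h => hf' (ContinuousLinearMap.coe_injective h)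
  have hr : f'.range = ⊤ := LinearMap.range_eq_top.2 (LinearMap.surjective hl)
  obtain ⟨K, s, hs, hK⟩ := (hf.to_implicitFunction hr).exists_lipschitzOnWith
  have h1 := hf.eq_implicitFunction hr
  have h2 : Filter.Tendsto (fun x => (hf.implicitToOpenPartialHomeomorph f f' hr x).2) (nhds a)
      (nhds 0) := by
    have := (hf.implicitToOpenPartialHomeomorph f f' hr).continuousAt
      (hf.mem_implicitToOpenPartialHomeomorph_source hr)
    have := (continuous_snd.continuousAt).comp this
    simpa [ContinuousAt, Function.comp_def] using this
  refine ⟨_, h1.and (h2 hs), ?_⟩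
  have hsub : ({x | f x = 0} ∩ {x | (hf.implicitFunction f f' hr (f x)
      (hf.implicitToOpenPartialHomeomorph f f' hr x).2 = x) ∧
      x ∈ (fun x => (hf.implicitToOpenPartialHomeomorph f f' hr x).2) ⁻¹' s}) ⊆
      hf.implicitFunction f f' hr (f a) '' s := by
    rintro x ⟨hx, hx1, hx2⟩
    refine ⟨_, hx2, ?_⟩
    rw [ha, ← (show f x = 0 from hx)]; exact hx1
  refine (dimH_mono hsub).trans (hK.dimH_image_le.trans ((dimH_mono (Set.subset_univ _)).trans ?_))
  rw [Real.dimH_univ_eq_finrank]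
  have := LinearMap.finrank_range_add_finrank_ker (f' : (Fin n → ℝ) →ₗ[ℝ] ℝ)
  have hr' : LinearMap.range (f' : (Fin n → ℝ) →ₗ[ℝ] ℝ) = ⊤ := hr
  rw [hr'] at this
  simp at this
  have e : Module.finrank ℝ f'.ker = n - 1 := by
    have : 1 + Module.finrank ℝ f'.ker = n := this
    omega
  rw [e]

lemma dimH_zeros {n : ℕ} (m : ℕ) : ∀ p : MvPolynomial (Fin n) ℝ, p.totalDegree ≤ m → p ≠ 0 →
    dimH {x | MvPolynomial.eval x p = 0} ≤ ((n - 1 : ℕ) : ℝ≥0∞) := by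
  induction m with
  | zero =>
    intro p hp h0
    have := MvPolynomial.totalDegree_eq_zero_iff_eq_C.1 (Nat.le_zero.1 hp)
    have hc : MvPolynomial.coeff 0 p ≠ 0 := fun h => h0 (by rw [this, h]; simp)
    rw [this]
    simp [hc]
  | succ m ih =>
    intro p hp h0
    by_cases hd : p.totalDegree = 0
    · exact ih p (by omega) h0
    obtain ⟨i, hi, hlt⟩ := mv_exists_pderiv p hd
    have hsub : {x | MvPolynomial.eval x p = 0} ⊆
      {x | MvPolynomial.eval x (MvPolynomial.pderiv i p) = 0} ∪
      {x | MvPolynomial.eval x p = 0 ∧ MvPolynomial.eval x (MvPolynomial.pderiv i p) ≠ 0} := by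
      intro x hx
      by_cases h : MvPolynomial.eval x (MvPolynomial.pderiv i p) = 0
      · exact Or.inl h
      · exact Or.inr ⟨hx, h⟩
    refine (dimH_mono hsub).trans ?_
    rw [dimH_union]
    refine max_le (ih _ (by omega) hi) ?_
    by_contra! hcon
    obtain ⟨x, ⟨hx, hx'⟩, h⟩ := exists_mem_nhdsWithin_lt_dimH_of_lt_dimH hcon
    obtain ⟨U, hU, hdim⟩ := dimH_level _ _ x (mv_hasStrict p x) (by
      intro h
      apply hx'
      have := congrArg (fun g => g (Pi.single i 1)) h
      simpa [Pi.single_apply] using this) hx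
    have := h ({y | MvPolynomial.eval y p = 0 ∧ MvPolynomial.eval y (MvPolynomial.pderiv i p) ≠ 0} ∩ U)
      (Filter.inter_mem self_mem_nhdsWithin (mem_nhdsWithin_of_mem_nhds hU))
    exact absurd (this.trans_le ((dimH_mono (by
      intro y hy; exact ⟨hy.1.1, hy.2⟩)).trans hdim)) (lt_irrefl _)

/-- The polynomial function with coefficient vector `a`. -/
noncomputable def polyP {n k : ℕ} (a : multiIdx n k → ℝ) (y : Fin n → ℝ) : ℝ :=
  ∑ ν, a ν * ∏ i, y i ^ (ν.1 i)

/-- The corresponding formal polynomial. -/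
noncomputable def mvP {n k : ℕ} (a : multiIdx n k → ℝ) : MvPolynomial (Fin n) ℝ :=
  ∑ ν, MvPolynomial.monomial (Finsupp.equivFunOnFinite.symm ν.1) (a ν)

lemma eval_mvP {n k : ℕ} (a : multiIdx n k → ℝ) (y : Fin n → ℝ) :
    MvPolynomial.eval y (mvP a) = polyP a y := by
  simp [mvP, polyP, MvPolynomial.eval_monomial, Finsupp.prod_fintype]

lemma mem_multiIdx {n k : ℕ} {ν : Fin n → ℕ} : ν ∈ multiIdx n k ↔ ∑ i, ν i ≤ k := by
  simp only [multiIdx, Finset.mem_filter, Fintype.mem_piFinset, Finset.mem_range, and_iff_right_iff_imp]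
  intro h i
  have := Finset.single_le_sum (f := ν) (fun _ _ => Nat.zero_le _) (Finset.mem_univ i)
  omega

lemma totalDegree_mvP {n k : ℕ} (a : multiIdx n k → ℝ) : (mvP a).totalDegree ≤ k := by
  refine MvPolynomial.totalDegree_finsetSum_le fun ν _ => ?_
  refine (MvPolynomial.totalDegree_monomial_le _ _).trans ?_
  have := mem_multiIdx.1 ν.2
  simpa [Finsupp.degree_eq_sum, Finsupp.sum_fintype] using this

lemma mvP_ne_zero {n k : ℕ} (a : multiIdx n k → ℝ) (ha : a ≠ 0) : mvP a ≠ 0 := by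
  obtain ⟨ν, hν⟩ := Function.ne_iff.1 ha
  intro h
  apply hν
  have := congrArg (MvPolynomial.coeff (Finsupp.equivFunOnFinite.symm ν.1)) h
  simpa [mvP, MvPolynomial.coeff_sum, MvPolynomial.coeff_monomial, Subtype.coe_inj] using this

lemma degLE_rep {n k : ℕ} {g : (Fin n → ℝ) → ℝ} (hg : g ∈ degLE n k) :
    ∃ a : multiIdx n k → ℝ, ∀ y, g y = polyP a y := by
  obtain ⟨q, hq, hgq⟩ := hg
  refine ⟨fun ν => q.coeff (Finsupp.equivFunOnFinite.symm ν.1), fun y => ?_⟩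
  rw [hgq, MvPolynomial.eval_eq', polyP]
  rw [Finset.sum_coe_sort (multiIdx n k) (fun ν => q.coeff (Finsupp.equivFunOnFinite.symm ν) * ∏ i, y i ^ (ν i))]
  refine Finset.sum_bij_ne_zero (fun m _ _ => ⇑m) ?_ ?_ ?_ ?_
  · intro m hm _
    rw [mem_multiIdx]
    have := (MvPolynomial.le_totalDegree hm).trans hq
    simpa [Finsupp.sum_fintype] using this
  · intro a _ _ b _ _ h
    exact DFunLike.coe_injective h
  · intro ν _ h
    refine ⟨Finsupp.equivFunOnFinite.symm ν, ?_, by simpa using h, by simp⟩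
    rw [MvPolynomial.mem_support_iff]
    exact left_ne_zero_of_mul h
  · intro m _ _
    have : Finsupp.equivFunOnFinite.symm ⇑m = m := Finsupp.equivFunOnFinite.symm_apply_apply m
    rw [this]

lemma degLE_affine {n k : ℕ} {g : (Fin n → ℝ) → ℝ} (hg : g ∈ degLE n k) (s : ℝ) (t : Fin n → ℝ) :
    (fun x : Fin n → ℝ => g (s • x + t)) ∈ degLE n k := by
  obtain ⟨q, hq, hgq⟩ := hg
  refine ⟨∑ m ∈ q.support, MvPolynomial.C (q.coeff m) *
    ∏ i, (MvPolynomial.C s * MvPolynomial.X i + MvPolynomial.C (t i)) ^ (m i), ?_, fun x => ?_⟩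
  · refine MvPolynomial.totalDegree_finsetSum_le fun m hm => ?_
    refine (MvPolynomial.totalDegree_mul _ _).trans ?_
    rw [MvPolynomial.totalDegree_C, zero_add]
    refine (MvPolynomial.totalDegree_finsetProd _ _).trans ?_
    refine le_trans (Finset.sum_le_sum (g := fun i => m i) fun i _ => ?_) ?_
    · refine (MvPolynomial.totalDegree_pow _ _).trans ?_
      have : (MvPolynomial.C s * MvPolynomial.X i + MvPolynomial.C (t i) :
          MvPolynomial (Fin n) ℝ).totalDegree ≤ 1 := by
        refine (MvPolynomial.totalDegree_add _ _).trans (max_le ?_ (by simp))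
        refine (MvPolynomial.totalDegree_mul _ _).trans ?_
        simp
      calc _ ≤ m i * 1 := Nat.mul_le_mul_left _ this
        _ = m i := mul_one _
    · have := (MvPolynomial.le_totalDegree hm).trans hq
      simpa [Finsupp.sum_fintype] using this
  · change g (s • x + t) = _
    rw [hgq, MvPolynomial.eval_eq']
    simp

lemma polyP_mem {n k : ℕ} (a : multiIdx n k → ℝ) : polyP a ∈ degLE n k :=
  ⟨mvP a, totalDegree_mvP a, fun x => (eval_mvP a x).symm⟩

lemma continuous_polyP {n k : ℕ} (a : multiIdx n k → ℝ) : Continuous (polyP a) := by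
  unfold polyP; fun_prop

lemma abs_polyP_le {n k : ℕ} (a : multiIdx n k → ℝ) (y : Fin n → ℝ)
    (hy : y ∈ closedBall (0 : Fin n → ℝ) (1/2)) :
    |polyP a y| ≤ (Fintype.card (multiIdx n k)) * ‖a‖ := by
  unfold polyP
  refine (Finset.abs_sum_le_sum_abs _ _).trans ?_
  refine (Finset.sum_le_card_nsmul _ _ ‖a‖ fun ν _ => ?_).trans (by simp)
  rw [abs_mul, Finset.abs_prod]
  have h1 : ∏ i, |y i ^ ν.1 i| ≤ 1 := by
    refine Finset.prod_le_one (fun _ _ => abs_nonneg _) fun i _ => ?_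
    rw [abs_pow]
    refine pow_le_one₀ (abs_nonneg _) ?_
    have := norm_le_pi_norm y i
    rw [mem_closedBall_zero_iff] at hy
    rw [Real.norm_eq_abs] at this
    linarith
  have h2 : |a ν| ≤ ‖a‖ := norm_le_pi_norm a ν
  calc _ ≤ ‖a‖ * 1 := mul_le_mul h2 h1 (Finset.prod_nonneg fun _ _ => abs_nonneg _) (norm_nonneg _)
    _ = _ := mul_one _

lemma polyP_sub {n k : ℕ} (a b : multiIdx n k → ℝ) (y : Fin n → ℝ) :
    polyP (a - b) y = polyP a y - polyP b y := by
  simp [polyP, sub_mul, Finset.sum_sub_distrib]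

lemma polyP_smul {n k : ℕ} (c : ℝ) (b : multiIdx n k → ℝ) (y : Fin n → ℝ) :
    polyP (c • b) y = c * polyP b y := by
  simp [polyP, Finset.mul_sum, mul_assoc]

lemma exists_open_cover {n : ℕ} (hn : 1 ≤ n) {d : ℝ} (hd1 : (n : ℝ) - 1 < d) (K : ℝ≥0∞) (hK : K ≠ ∞)
    (ρ₀ : ℝ) (hρ₀ : 0 < ρ₀) (Z : Set (Fin n → ℝ)) (hZ : dimH Z ≤ ((n - 1 : ℕ) : ℝ≥0∞))
    (η : ℝ≥0∞) (hη : η ≠ 0) :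
    ∃ V : Set (Fin n → ℝ), IsOpen V ∧ Z ⊆ V ∧ ∀ σ : Measure (Fin n → ℝ),
      (∀ y, ∀ ρ, 0 < ρ → ρ ≤ ρ₀ → σ (ball y ρ) ≤ K * ENNReal.ofReal ρ ^ d) → σ V ≤ η := by
  have hn' : (1:ℝ) ≤ n := by exact_mod_cast hn
  have hd : 0 < d := by linarith
  have hZ0 : μH[d] Z = 0 := by
    lift d to NNReal using hd.le
    apply hausdorffMeasure_of_dimH_lt
    refine hZ.trans_lt ?_
    have : ((n - 1 : ℕ) : NNReal) < d := by
      rw [← NNReal.coe_lt_coe, NNReal.coe_natCast, Nat.cast_sub hn]; simpa using hd1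
    exact_mod_cast this
  set K' : ℝ≥0∞ := K * 2 ^ d * 2 with hK'
  have hK't : K' ≠ ∞ := by
    refine ENNReal.mul_ne_top (ENNReal.mul_ne_top hK (ENNReal.rpow_ne_top_of_nonneg hd.le ?_)) ?_ <;> simp
  set η' := η / K' with hη'
  have hη'0 : η' ≠ 0 := ENNReal.div_ne_zero.2 ⟨hη, hK't⟩
  have hηK : K' * η' ≤ η := ENNReal.mul_div_le
  rw [Measure.hausdorffMeasure_apply] at hZ0
  have h1 := (le_iSup₂ (f := fun (r : ℝ≥0∞) (_ : 0 < r) => ⨅ (t : ℕ → Set (Fin n → ℝ)) (_ : Z ⊆ ⋃ n, t n) (_ : ∀ n, ediam (t n) ≤ r),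
          ∑' n, ⨆ _ : (t n).Nonempty, ediam (t n) ^ d) (ENNReal.ofReal (ρ₀/2)) (by simpa using hρ₀)).trans hZ0.le
  have h2 := lt_of_le_of_lt h1 (pos_iff_ne_zero.2 hη'0)
  simp only [iInf_lt_iff] at h2
  obtain ⟨t, hZt, htd, hts⟩ := h2
  obtain ⟨ε', hε', hsum⟩ := ENNReal.exists_pos_sum_of_countable hη'0 ℕ
  let ε : ℕ → ℝ := fun i => min ((ε' i : ℝ) ^ (1/d)) (ρ₀/2)
  have hεpos : ∀ i, 0 < ε i := fun i => lt_min (Real.rpow_pos_of_pos (by exact_mod_cast hε' i) _) (by linarith)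
  have hεd : ∀ i, ENNReal.ofReal (ε i) ^ d ≤ ε' i := by
    intro i
    rw [ENNReal.ofReal_rpow_of_pos (hεpos i)]
    rw [← ENNReal.ofReal_coe_nnreal]
    apply ENNReal.ofReal_le_ofReal
    calc ε i ^ d ≤ ((ε' i : ℝ) ^ (1/d)) ^ d := Real.rpow_le_rpow (hεpos i).le (min_le_left _ _) hd.le
      _ = ε' i := by
        rw [← Real.rpow_mul (by positivity)]; field_simp; simp
  have htt : ∀ i, ediam (t i) ≠ ∞ := fun i => ne_top_of_le_ne_top ENNReal.ofReal_ne_top (htd i)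
  let D : ℕ → ℝ := fun i => (ediam (t i)).toReal
  have hD0 : ∀ i, 0 ≤ D i := fun i => ENNReal.toReal_nonneg
  have hD : ∀ i, D i ≤ ρ₀/2 := fun i => ENNReal.toReal_le_of_le_ofReal (by linarith) (htd i)
  refine ⟨⋃ i, ⋃ h : (t i).Nonempty, ball h.some (D i + ε i), ?_, ?_, ?_⟩
  · exact isOpen_iUnion fun i => isOpen_iUnion fun h => isOpen_ball
  · intro z hz
    obtain ⟨i, hi⟩ := Set.mem_iUnion.1 (hZt hz)
    have hne : (t i).Nonempty := ⟨z, hi⟩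
    refine Set.mem_iUnion₂.2 ⟨i, hne, ?_⟩
    rw [mem_ball]
    have : dist z hne.some ≤ D i := by
      rw [dist_edist]
      exact ENNReal.toReal_mono (htt i) (edist_le_ediam_of_mem hi hne.some_mem)
    linarith [hεpos i]
  · intro σ hσ
    calc σ (⋃ i, ⋃ h : (t i).Nonempty, ball h.some (D i + ε i))
        ≤ ∑' i, σ (⋃ h : (t i).Nonempty, ball h.some (D i + ε i)) := measure_iUnion_le _
      _ ≤ ∑' i, K * 2 ^ d * ((⨆ _ : (t i).Nonempty, ediam (t i) ^ d) + ε' i) := by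
        refine ENNReal.tsum_le_tsum fun i => ?_
        by_cases hne : (t i).Nonempty
        · simp only [hne, Set.iUnion_true, iSup_pos]
          refine (hσ _ _ (by linarith [hεpos i, hD0 i]) (by linarith [hD i, min_le_right ((ε' i : ℝ) ^ (1/d)) (ρ₀/2)])).trans ?_
          rw [mul_assoc]
          refine mul_le_mul_right ?_ _
          rw [ENNReal.ofReal_add (hD0 i) (hεpos i).le, ENNReal.ofReal_toReal (htt i)]
          refine le_trans ?_ (mul_le_mul_right (add_le_add_right (hεd i) _) _)
          generalize ediam (t i) = A
          generalize ENNReal.ofReal (ε i) = B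
          rcases le_total A B with h | h
          · calc (A + B) ^ d ≤ (2 * B) ^ d := by
                  rw [two_mul]; gcongr
              _ = 2 ^ d * B ^ d := ENNReal.mul_rpow_of_nonneg _ _ hd.le
              _ ≤ _ := mul_le_mul_right le_add_self _
          · calc (A + B) ^ d ≤ (2 * A) ^ d := by
                  rw [two_mul]; gcongr
              _ = 2 ^ d * A ^ d := ENNReal.mul_rpow_of_nonneg _ _ hd.le
              _ ≤ _ := mul_le_mul_right le_self_add _
        · simp [hne]
      _ = K * 2 ^ d * ((∑' i, ⨆ _ : (t i).Nonempty, ediam (t i) ^ d) + ∑' i, (ε' i : ℝ≥0∞)) := by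
        rw [ENNReal.tsum_mul_left, ENNReal.tsum_add]
      _ ≤ K * 2 ^ d * (η' + η') := mul_le_mul_right (add_le_add hts.le hsum.le) _
      _ = K' * η' := by rw [hK']; ring
      _ ≤ η := hηK

/-- Normalized measures on the cube with upper `d`-regularity. -/
def RegM {n : ℕ} (d : ℝ) (K : ℝ≥0∞) (ρ₀ : ℝ) (σ : Measure (Fin n → ℝ)) : Prop :=
  IsProbabilityMeasure σ ∧ σ (closedBall (0 : Fin n → ℝ) (1/2))ᶜ = 0 ∧
    ∀ y, ∀ ρ, 0 < ρ → ρ ≤ ρ₀ → σ (ball y ρ) ≤ K * ENNReal.ofReal ρ ^ d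

lemma integrable_polyP_mul {n k : ℕ} {d : ℝ} {K : ℝ≥0∞} {ρ₀ : ℝ} {σ : Measure (Fin n → ℝ)}
    (hσ : RegM d K ρ₀ σ) (a b : multiIdx n k → ℝ) :
    Integrable (fun y => polyP a y * polyP b y) σ := by
  have := hσ.1
  refine Integrable.of_bound ((continuous_polyP a).mul (continuous_polyP b)).aestronglyMeasurable
    ((Fintype.card (multiIdx n k) * ‖a‖) * (Fintype.card (multiIdx n k) * ‖b‖)) ?_
  have h : ∀ᵐ y ∂σ, y ∈ closedBall (0 : Fin n → ℝ) (1/2) := hσ.2.1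
  filter_upwards [h] with y hy
  rw [norm_mul]
  exact mul_le_mul (abs_polyP_le a y hy) (abs_polyP_le b y hy) (norm_nonneg _) (by positivity)

lemma local_bound {n k : ℕ} {d : ℝ} (hd1 : (n : ℝ) - 1 < d) (K : ℝ≥0∞) (hK : K ≠ ∞)
    (ρ₀ : ℝ) (hρ₀ : 0 < ρ₀) (a : multiIdx n k → ℝ) (ha : a ≠ 0) :
    ∃ U ∈ nhds a, ∃ c : ℝ, 0 < c ∧ ∀ a' ∈ U, ∀ σ : Measure (Fin n → ℝ), RegM d K ρ₀ σ →
      c ≤ ∫ y, polyP a' y * polyP a' y ∂σ := by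
  obtain ⟨V, hVo, hZV, hV⟩ : ∃ V : Set (Fin n → ℝ), IsOpen V ∧ {y | polyP a y = 0} ⊆ V ∧
      ∀ σ : Measure (Fin n → ℝ),
      (∀ y, ∀ ρ, 0 < ρ → ρ ≤ ρ₀ → σ (ball y ρ) ≤ K * ENNReal.ofReal ρ ^ d) → σ V ≤ 1/2 := by
    rcases Nat.eq_zero_or_pos n with h0 | hn
    · refine ⟨∅, isOpen_empty, ?_, by simp⟩
      intro y hy
      exfalso
      apply mvP_ne_zero a ha
      apply MvPolynomial.funext
      intro x
      subst h0
      rw [eval_mvP, Subsingleton.elim x y, map_zero]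
      exact hy
    · have hz := dimH_zeros k (mvP a) (totalDegree_mvP a) (mvP_ne_zero a ha)
      simp only [eval_mvP] at hz
      exact exists_open_cover hn hd1 K hK ρ₀ hρ₀ _ hz _ (by simp)
  have hcomp : IsCompact (closedBall (0 : Fin n → ℝ) (1/2) \ V) :=
    (isCompact_closedBall _ _).diff hVo
  obtain ⟨δ, hδ, hδb⟩ : ∃ δ : ℝ, 0 < δ ∧ ∀ y ∈ closedBall (0 : Fin n → ℝ) (1/2) \ V,
      δ ≤ |polyP a y| :=
    hcomp.exists_forall_le' (continuous_polyP a).abs.continuousOn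
      (fun y hy => abs_pos.2 fun h => hy.2 (hZV h))
  set N : ℝ := ((Fintype.card (multiIdx n k) : ℕ) : ℝ) with hN
  have hN0 : 0 ≤ N := Nat.cast_nonneg _
  refine ⟨ball a (δ / (2 * (N + 1))), ball_mem_nhds _ (by positivity), (δ/2)^2 * (1/2), by positivity,
    fun a' ha' σ hσ => ?_⟩
  have := hσ.1
  set B := closedBall (0 : Fin n → ℝ) (1/2)
  have hm : MeasurableSet (B \ V) := measurableSet_closedBall.diff hVo.measurableSet
  have hlow : ∀ y ∈ B \ V, (δ/2)^2 ≤ polyP a' y * polyP a' y := by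
    intro y hy
    have h1 := abs_polyP_le (a' - a) y hy.1
    rw [polyP_sub] at h1
    rw [mem_ball, dist_eq_norm] at ha'
    have h2 : N * ‖a' - a‖ ≤ δ / 2 := by
      calc N * ‖a' - a‖ ≤ (N + 1) * (δ / (2 * (N + 1))) := by
            apply mul_le_mul <;> first | linarith | positivity
        _ = δ / 2 := by field_simp
    have h3 := hδb y hy
    have h4 : δ/2 ≤ |polyP a' y| := by
      have := abs_sub_abs_le_abs_sub (polyP a y) (polyP a' y)
      rw [abs_sub_comm] at this
      linarith
    rw [← abs_mul_abs_self (polyP a' y), sq]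
    exact mul_le_mul h4 h4 (by positivity) (abs_nonneg _)
  have hmeas : 1/2 ≤ σ.real (B \ V) := by
    have h1 : σ.real Bᶜ = 0 := by rw [Measure.real, hσ.2.1]; rfl
    have h2 : σ.real V ≤ 1/2 := by
      have := ENNReal.toReal_mono (by simp) (hV σ hσ.2.2)
      simpa [Measure.real] using this
    have h3 : (1:ℝ) ≤ σ.real (B \ V) + (σ.real Bᶜ + σ.real V) := by
      have h5 : σ.real Set.univ = 1 := by simp
      rw [← h5]
      calc σ.real Set.univ ≤ σ.real ((B \ V) ∪ (Bᶜ ∪ V)) := by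
            apply measureReal_mono _ (measure_ne_top _ _)
            intro y _
            by_cases h : y ∈ B <;> by_cases h' : y ∈ V <;> simp [h, h']
        _ ≤ _ := (measureReal_union_le _ _).trans (add_le_add_right (measureReal_union_le _ _) _)
    linarith
  calc (δ/2)^2 * (1/2) ≤ (δ/2)^2 * σ.real (B \ V) := by gcongr
    _ = ∫ y in B \ V, (δ/2)^2 ∂σ := by simp [mul_comm]
    _ ≤ ∫ y in B \ V, polyP a' y * polyP a' y ∂σ :=
      setIntegral_mono_on (integrable_const _) (integrable_polyP_mul hσ a' a').integrableOn hm hlow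
    _ ≤ _ := setIntegral_le_integral (integrable_polyP_mul hσ a' a')
      (Filter.Eventually.of_forall fun y => mul_self_nonneg _)

lemma key_bound {n : ℕ} (k : ℕ) {d : ℝ} (hd1 : (n : ℝ) - 1 < d) (K : ℝ≥0∞) (hK : K ≠ ∞)
    (ρ₀ : ℝ) (hρ₀ : 0 < ρ₀) :
    ∃ c : ℝ, 0 < c ∧ ∀ σ : Measure (Fin n → ℝ), RegM d K ρ₀ σ → ∀ a : multiIdx n k → ℝ,
      c * ‖a‖ ^ 2 ≤ ∫ y, polyP a y * polyP a y ∂σ := by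
  obtain ⟨c, hc, h⟩ : ∃ c : ℝ, 0 < c ∧ ∀ a ∈ sphere (0 : multiIdx n k → ℝ) 1,
      ∀ σ : Measure (Fin n → ℝ), RegM d K ρ₀ σ → c ≤ ∫ y, polyP a y * polyP a y ∂σ := by
    refine IsCompact.induction_on (p := fun s => ∃ c : ℝ, 0 < c ∧ ∀ a ∈ s,
      ∀ σ : Measure (Fin n → ℝ), RegM d K ρ₀ σ → c ≤ ∫ y, polyP a y * polyP a y ∂σ)
      (isCompact_sphere (0 : multiIdx n k → ℝ) 1) ⟨1, one_pos, by simp⟩ ?_ ?_ ?_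
    · rintro s t hst ⟨c, hc, h⟩
      exact ⟨c, hc, fun a ha => h a (hst ha)⟩
    · rintro s t ⟨c, hc, h⟩ ⟨c', hc', h'⟩
      refine ⟨min c c', lt_min hc hc', ?_⟩
      rintro a (ha | ha) σ hσ
      · exact (min_le_left _ _).trans (h a ha σ hσ)
      · exact (min_le_right _ _).trans (h' a ha σ hσ)
    · intro a ha
      obtain ⟨U, hU, hh⟩ := local_bound hd1 K hK ρ₀ hρ₀ a (by
        rintro rfl; simp at ha)
      exact ⟨U, mem_nhdsWithin_of_mem_nhds hU, hh⟩
  refine ⟨c, hc, fun σ hσ a => ?_⟩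
  by_cases ha : a = 0
  · subst ha
    simp [polyP]
  have hna : 0 < ‖a‖ := norm_pos_iff.2 ha
  have h1 := h (‖a‖⁻¹ • a) (by simp [norm_smul, hna.ne']) σ hσ
  have h2 : ∀ y, polyP (‖a‖⁻¹ • a) y * polyP (‖a‖⁻¹ • a) y = (‖a‖⁻¹) ^ 2 * (polyP a y * polyP a y) := by
    intro y; rw [polyP_smul]; ring
  simp only [h2] at h1
  rw [integral_const_mul] at h1
  calc c * ‖a‖ ^ 2 ≤ ((‖a‖⁻¹) ^ 2 * ∫ y, polyP a y * polyP a y ∂σ) * ‖a‖ ^ 2 := by gcongr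
    _ = _ := by field_simp

lemma dual_basis {n k : ℕ} {d : ℝ} {K : ℝ≥0∞} {ρ₀ : ℝ} {σ : Measure (Fin n → ℝ)}
    (hσ : RegM d K ρ₀ σ) (c : ℝ) (hc : 0 < c)
    (h : ∀ a : multiIdx n k → ℝ, c * ‖a‖ ^ 2 ≤ ∫ y, polyP a y * polyP a y ∂σ)
    (ν : multiIdx n k) :
    ∃ b : multiIdx n k → ℝ, ‖b‖ ≤ c⁻¹ ∧ ∀ a : multiIdx n k → ℝ,
      ∫ y, polyP a y * polyP b y ∂σ = a ν := by
  have hexp : ∀ a b : multiIdx n k → ℝ, ∫ y, polyP a y * polyP b y ∂σ =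
      ∑ μ, a μ * ∫ y, polyP (Pi.single μ (1:ℝ)) y * polyP b y ∂σ := by
    intro a b
    simp only [← integral_const_mul]
    rw [← integral_finsetSum]
    · congr 1; ext y
      conv_lhs => rw [polyP]
      rw [Finset.sum_mul]
      refine Finset.sum_congr rfl fun μ _ => ?_
      have : polyP (Pi.single μ (1:ℝ)) y = ∏ i, y i ^ (μ.1 i) := by
        simp [polyP, Pi.single_apply]
      rw [this, mul_assoc]
    · intro μ _
      exact (integrable_polyP_mul hσ _ b).const_mul _
  let L : (multiIdx n k → ℝ) →ₗ[ℝ] (multiIdx n k → ℝ) :=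
    { toFun := fun b μ => ∫ y, polyP (Pi.single μ (1:ℝ)) y * polyP b y ∂σ
      map_add' := by
        intro b b'
        ext μ
        simp only [Pi.add_apply]
        rw [← integral_add (integrable_polyP_mul hσ _ _) (integrable_polyP_mul hσ _ _)]
        congr 1; ext y
        rw [← mul_add]; congr 1
        simp [polyP, add_mul, Finset.sum_add_distrib]
      map_smul' := by
        intro s b
        ext μ
        simp only [Pi.smul_apply, smul_eq_mul, RingHom.id_apply]
        rw [← integral_const_mul]
        congr 1; ext y
        rw [polyP_smul]; ring }
  have hL : ∀ a b, ∫ y, polyP a y * polyP b y ∂σ = ∑ μ, a μ * L b μ := hexp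
  have hinj : Function.Injective L := by
    rw [← LinearMap.ker_eq_bot, LinearMap.ker_eq_bot']
    intro b hb
    have h1 := h b
    rw [hL, hb] at h1
    simp at h1
    by_contra hne
    have := norm_pos_iff.2 hne
    have : 0 < c * ‖b‖ ^ 2 := by positivity
    linarith
  obtain ⟨b, hb⟩ := LinearMap.surjective_of_injective hinj (Pi.single ν 1)
  have hb' : ∀ a : multiIdx n k → ℝ, ∫ y, polyP a y * polyP b y ∂σ = a ν := by
    intro a
    rw [hL, hb]
    simp [Pi.single_apply]
  refine ⟨b, ?_, hb'⟩
  have h1 := h b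
  rw [hb'] at h1
  have h2 : b ν ≤ ‖b‖ := (le_abs_self _).trans (norm_le_pi_norm b ν)
  rcases (norm_nonneg b).eq_or_lt with h0 | h0
  · rw [← h0]; positivity
  · rw [← one_div, le_div_iff₀ hc]
    have : (‖b‖ * c) * ‖b‖ ≤ 1 * ‖b‖ := by nlinarith
    exact le_of_mul_le_mul_right this h0

/-- The rescaling map. -/
noncomputable def resc {n : ℕ} (w : Fin n → ℝ) (r : ℝ) (x : Fin n → ℝ) : Fin n → ℝ :=
  (2 * r)⁻¹ • x + (-((2 * r)⁻¹ • w))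

lemma resc_apply {n : ℕ} (w : Fin n → ℝ) (r : ℝ) (x : Fin n → ℝ) (i : Fin n) :
    resc w r x i = (x i - w i) / (2 * r) := by
  simp [resc]; ring

lemma continuous_resc {n : ℕ} (w : Fin n → ℝ) (r : ℝ) : Continuous (resc w r) := by
  unfold resc; fun_prop

lemma dist_resc {n : ℕ} (w : Fin n → ℝ) (r : ℝ) (hr : 0 < r) (x y : Fin n → ℝ) :
    dist x y = 2 * r * dist (resc w r x) (resc w r y) := by
  rw [resc, resc, dist_add_right, dist_smul₀, Real.norm_of_nonneg (by positivity)]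
  field_simp

lemma resc_mem {n : ℕ} (w : Fin n → ℝ) (r : ℝ) (hr : 0 < r) (x : Fin n → ℝ)
    (hx : x ∈ closedBall w r) : resc w r x ∈ closedBall (0 : Fin n → ℝ) (1/2) := by
  have h0 : resc w r w = 0 := by simp [resc]
  rw [mem_closedBall] at *
  rw [← h0]
  rw [dist_resc w r hr] at hx
  nlinarith

lemma reg_sigma {n : ℕ} {d : ℝ} {S : Set (Fin n → ℝ)} (hScl : IsClosed S)
    {c₁ c₂ : ℝ≥0∞} (hc₁ : 0 < c₁) (hc₂ : c₂ ≠ ∞)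
    (hreg : ∀ w ∈ S, ∀ ρ : ℝ, 0 < ρ → ρ ≤ 1 →
      c₁ * ENNReal.ofReal ρ ^ d ≤ μH[d] (closedBall w ρ ∩ S) ∧
        μH[d] (closedBall w ρ ∩ S) ≤ c₂ * ENNReal.ofReal ρ ^ d)
    {R : ℝ} (hR : 0 < R) {κ : ℝ} (hκ : κ = min 1 (2 / R))
    {w : Fin n → ℝ} {r : ℝ} (hw : w ∈ S) (hr : 0 < r) (hrR : 2 * r ≤ R) :
    μH[d] (closedBall w r ∩ S) ≠ 0 ∧ μH[d] (closedBall w r ∩ S) ≠ ∞ ∧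
    RegM d (c₂ / c₁ * ENNReal.ofReal ((4 / κ) ^ d)) (1 / (2 * R))
      ((μH[d] (closedBall w r ∩ S))⁻¹ •
        (μH[d].restrict (closedBall w r ∩ S)).map (resc w r)) := by
  set m := μH[d] (closedBall w r ∩ S) with hm
  have hκ0 : 0 < κ := by rw [hκ]; positivity
  have hκ1 : κ ≤ 1 := by rw [hκ]; exact min_le_left _ _
  have hκR : κ * R ≤ 2 := by
    have : κ ≤ 2 / R := by rw [hκ]; exact min_le_right _ _
    rwa [le_div_iff₀ hR] at this
  have hκr : 0 < κ * r := by positivity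
  have hκr1 : κ * r ≤ 1 := by nlinarith
  have hXe : ENNReal.ofReal (κ * r) ^ d = ENNReal.ofReal ((κ * r) ^ d) :=
    ENNReal.ofReal_rpow_of_pos hκr
  have hX0 : ENNReal.ofReal (κ * r) ^ d ≠ 0 := by
    rw [hXe]; simpa using Real.rpow_pos_of_pos hκr d
  have hXt : ENNReal.ofReal (κ * r) ^ d ≠ ∞ := by rw [hXe]; exact ENNReal.ofReal_ne_top
  have hlow : c₁ * ENNReal.ofReal (κ * r) ^ d ≤ m := by
    refine (hreg w hw _ hκr hκr1).1.trans (measure_mono ?_)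
    exact Set.inter_subset_inter_left _ (closedBall_subset_closedBall (by nlinarith))
  have hm0 : m ≠ 0 := fun h => by
    rw [h] at hlow
    exact mul_ne_zero hc₁.ne' hX0 (le_antisymm hlow bot_le)
  have hcpt : IsCompact (closedBall w r ∩ S) := (isCompact_closedBall w r).inter_right hScl
  have hmt : m ≠ ∞ := by
    refine (hcpt.measure_lt_top_of_nhdsWithin fun x hx => ?_).ne
    refine ⟨closedBall x 1 ∩ S, ?_, ?_⟩
    · refine Filter.inter_mem (mem_nhdsWithin_of_mem_nhds (closedBall_mem_nhds x one_pos)) ?_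
      exact Filter.mem_of_superset self_mem_nhdsWithin Set.inter_subset_right
    · refine (hreg x hx.2 1 one_pos le_rfl).2.trans_lt ?_
      simpa using hc₂.lt_top
  have hTm : Measurable (resc w r) := (continuous_resc w r).measurable
  have hQm : MeasurableSet (closedBall w r ∩ S) := hcpt.isClosed.measurableSet
  refine ⟨hm0, hmt, ?_, ?_, ?_⟩
  · constructor
    rw [Measure.smul_apply, Measure.map_apply hTm MeasurableSet.univ, smul_eq_mul, Set.preimage_univ,
      Measure.restrict_apply_univ, ENNReal.inv_mul_cancel hm0 hmt]
  · rw [Measure.smul_apply, Measure.map_apply hTm measurableSet_closedBall.compl,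
      Measure.restrict_apply (hTm measurableSet_closedBall.compl)]
    have : resc w r ⁻¹' (closedBall (0 : Fin n → ℝ) (1/2))ᶜ ∩ (closedBall w r ∩ S) = ∅ := by
      ext x
      simp only [Set.mem_inter_iff, Set.mem_preimage, Set.mem_compl_iff, Set.mem_empty_iff_false,
        iff_false]
      rintro ⟨h1, h2, _⟩
      exact h1 (resc_mem w r hr x h2)
    rw [this]; simp
  · intro y ρ hρ hρ1
    rw [Measure.smul_apply, Measure.map_apply hTm measurableSet_ball,
      Measure.restrict_apply (hTm measurableSet_ball), smul_eq_mul]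
    rcases Set.eq_empty_or_nonempty (resc w r ⁻¹' ball y ρ ∩ (closedBall w r ∩ S)) with h | ⟨x₀, hx₀, hx₀w, hx₀S⟩
    · rw [h]; simp
    have hρR : ρ * (2 * R) ≤ 1 := by rwa [le_div_iff₀ (by positivity)] at hρ1
    have hsub : resc w r ⁻¹' ball y ρ ∩ (closedBall w r ∩ S) ⊆ closedBall x₀ (4 * r * ρ) ∩ S := by
      rintro x ⟨hx, _, hxS⟩
      refine ⟨?_, hxS⟩
      rw [mem_closedBall, dist_resc w r hr]
      have h1 : dist (resc w r x) y < ρ := hx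
      have h2 : dist (resc w r x₀) y < ρ := hx₀
      have := dist_triangle_right (resc w r x) (resc w r x₀) y
      nlinarith
    have hup := (measure_mono hsub).trans (hreg x₀ hx₀S (4 * r * ρ) (by positivity) (by nlinarith)).2
    have hprod : ENNReal.ofReal (4 * r * ρ) ^ d =
        ENNReal.ofReal ((4 / κ) ^ d) * ENNReal.ofReal ρ ^ d * ENNReal.ofReal (κ * r) ^ d := by
      rw [hXe, ENNReal.ofReal_rpow_of_pos hρ, ENNReal.ofReal_rpow_of_pos (by positivity),
        ← ENNReal.ofReal_mul (by positivity), ← ENNReal.ofReal_mul (by positivity),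
        ← Real.mul_rpow (by positivity) (by positivity), ← Real.mul_rpow (by positivity) (by positivity)]
      congr 2; field_simp
    have hinv : m⁻¹ ≤ c₁⁻¹ * (ENNReal.ofReal (κ * r) ^ d)⁻¹ := by
      rw [← ENNReal.mul_inv (Or.inr hXt) (Or.inr hX0)]
      exact ENNReal.inv_le_inv.2 hlow
    calc _ ≤ (c₁⁻¹ * (ENNReal.ofReal (κ * r) ^ d)⁻¹) * (c₂ * ENNReal.ofReal (4 * r * ρ) ^ d) :=
          mul_le_mul' hinv hup
      _ = c₂ / c₁ * ENNReal.ofReal ((4 / κ) ^ d) * ENNReal.ofReal ρ ^ d *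
          ((ENNReal.ofReal (κ * r) ^ d)⁻¹ * ENNReal.ofReal (κ * r) ^ d) := by
          rw [hprod, div_eq_mul_inv c₂ c₁]; ring
      _ = _ := by rw [ENNReal.inv_mul_cancel hX0 hXt, mul_one]

/-- Representation formula for the orthogonal projection `P_{k,Q}` onto `P_k` on a `d`-set,
`n - 1 < d ≤ n`: there are polynomials `h_{Q,ν} ∈ P_k` with `‖h_{Q,ν}‖_{L^∞(Q)} ≤ C(S,R,n,k)`
such that for every `f ∈ L¹(Q∩S)`,
`P_{k,Q} f(x) = ∑_{|ν| ≤ k} ((1/H^d(Q∩S)) ∫_{Q∩S} f h_{Q,ν} dH^d) (x-x_Q)^ν / ℓ(Q)^{|ν|}`,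
where `P_{k,Q} f` is characterized by being in `P_k` and orthogonal to `P_k` differences. -/
theorem stmt_15 (n : ℕ) (d : ℝ) (hd1 : (n : ℝ) - 1 < d) (hdn : d ≤ n)
    (S : Set (Fin n → ℝ)) (hScl : IsClosed S)
    (c₁ c₂ : ℝ≥0∞) (hc₁ : 0 < c₁) (hc₂ : c₂ ≠ ∞)
    (hreg : ∀ w ∈ S, ∀ ρ : ℝ, 0 < ρ → ρ ≤ 1 →
      c₁ * ENNReal.ofReal ρ ^ d ≤ μH[d] (closedBall w ρ ∩ S) ∧
        μH[d] (closedBall w ρ ∩ S) ≤ c₂ * ENNReal.ofReal ρ ^ d)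
    (R : ℝ) (hR : 0 < R) (k : ℕ) :
    ∃ C : ℝ, ∀ (w : Fin n → ℝ) (r₀ : ℝ), w ∈ S → 0 < r₀ → 2 * r₀ ≤ R →
      ∃ h : (Fin n → ℕ) → ((Fin n → ℝ) → ℝ),
        (∀ ν ∈ multiIdx n k, h ν ∈ degLE n k) ∧
        (∀ ν ∈ multiIdx n k, ∀ x ∈ closedBall w r₀, |h ν x| ≤ C) ∧
        ∀ f : (Fin n → ℝ) → ℝ,
          Integrable f (μH[d].restrict (closedBall w r₀ ∩ S)) →
          ∀ Pf ∈ degLE n k,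
            (∀ g ∈ degLE n k,
              ∫ x in closedBall w r₀ ∩ S, (f x - Pf x) * g x ∂μH[d] = 0) →
            ∀ x, Pf x = ∑ ν ∈ multiIdx n k,
              ((μH[d] (closedBall w r₀ ∩ S)).toReal⁻¹ *
                  ∫ z in closedBall w r₀ ∩ S, f z * h ν z ∂μH[d]) *
                (∏ i, (x i - w i) ^ ν i) / (2 * r₀) ^ (∑ i, ν i) := by
  set κ : ℝ := min 1 (2 / R) with hκ
  set K : ℝ≥0∞ := c₂ / c₁ * ENNReal.ofReal ((4 / κ) ^ d) with hK
  have hKt : K ≠ ∞ :=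
    ENNReal.mul_ne_top (ENNReal.div_ne_top hc₂ hc₁.ne') ENNReal.ofReal_ne_top
  obtain ⟨c, hc, hkey⟩ := key_bound k hd1 K hKt (1 / (2 * R)) (by positivity)
  refine ⟨Fintype.card (multiIdx n k) * c⁻¹, fun w r hw hr hrR => ?_⟩
  obtain ⟨hm0, hmt, hσ⟩ := reg_sigma hScl hc₁ hc₂ hreg hR hκ hw hr hrR
  set σ := (μH[d] (closedBall w r ∩ S))⁻¹ •
        (μH[d].restrict (closedBall w r ∩ S)).map (resc w r) with hσdef
  choose b hbn hb using dual_basis hσ c hc (hkey σ hσ)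
  have hQc : IsCompact (closedBall w r ∩ S) := (isCompact_closedBall w r).inter_right hScl
  have hintegral : ∀ φ : (Fin n → ℝ) → ℝ, Continuous φ → ∫ y, φ y ∂σ =
      (μH[d] (closedBall w r ∩ S)).toReal⁻¹ *
        ∫ x in closedBall w r ∩ S, φ (resc w r x) ∂μH[d] := by
    intro φ hφ
    rw [hσdef, integral_smul_measure, integral_map (continuous_resc w r).aemeasurable
      hφ.aestronglyMeasurable, ENNReal.toReal_inv, smul_eq_mul]
  have hmem : ∀ ν : multiIdx n k, (fun x => polyP (b ν) (resc w r x)) ∈ degLE n k := fun ν =>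
    degLE_affine (polyP_mem (b ν)) _ _
  refine ⟨fun ν x => if hν : ν ∈ multiIdx n k then polyP (b ⟨ν, hν⟩) (resc w r x) else 0,
    ?_, ?_, ?_⟩
  · intro ν hν
    simp only [hν, dite_true]
    exact hmem ⟨ν, hν⟩
  · intro ν hν x hx
    simp only [hν, dite_true]
    refine (abs_polyP_le _ _ (resc_mem w r hr x hx)).trans ?_
    gcongr
    exact hbn _
  · intro f hf Pf hPf horth x
    obtain ⟨a, ha⟩ := degLE_rep (degLE_affine hPf (2 * r) w)
    have hPa : ∀ x, Pf x = polyP a (resc w r x) := by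
      intro x
      rw [← ha]
      congr 1
      ext i
      simp only [Pi.add_apply, Pi.smul_apply, smul_eq_mul, resc_apply]
      field_simp
      ring
    have hcoef : ∀ ν : multiIdx n k, (μH[d] (closedBall w r ∩ S)).toReal⁻¹ *
        ∫ z in closedBall w r ∩ S, f z * polyP (b ν) (resc w r z) ∂μH[d] = a ν := by
      intro ν
      have hg : Continuous (fun z => polyP (b ν) (resc w r z)) :=
        (continuous_polyP _).comp (continuous_resc w r)
      have hP : Continuous Pf := by
        rw [funext hPa]; exact (continuous_polyP _).comp (continuous_resc w r)
      have hbd : ∀ᵐ z ∂(μH[d].restrict (closedBall w r ∩ S)),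
          ‖polyP (b ν) (resc w r z)‖ ≤ Fintype.card (multiIdx n k) * ‖b ν‖ := by
        filter_upwards [ae_restrict_mem hQc.isClosed.measurableSet] with z hz
        exact abs_polyP_le _ _ (resc_mem w r hr z hz.1)
      have hi1 : Integrable (fun z => f z * polyP (b ν) (resc w r z))
          (μH[d].restrict (closedBall w r ∩ S)) :=
        hf.mul_bdd hg.aestronglyMeasurable hbd
      have hi2 : Integrable (fun z => Pf z * polyP (b ν) (resc w r z))
          (μH[d].restrict (closedBall w r ∩ S)) := by
        have hfin : IsFiniteMeasure (μH[d].restrict (closedBall w r ∩ S)) :=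
          ⟨by simpa using hmt.lt_top⟩
        refine Integrable.mul_bdd ?_ hg.aestronglyMeasurable hbd
        refine Integrable.of_bound hP.aestronglyMeasurable
          (Fintype.card (multiIdx n k) * ‖a‖) ?_
        filter_upwards [ae_restrict_mem hQc.isClosed.measurableSet] with z hz
        rw [hPa]
        exact abs_polyP_le _ _ (resc_mem w r hr z hz.1)
      have h0 := horth _ (hmem ν)
      simp only [sub_mul] at h0
      rw [integral_sub hi1 hi2, sub_eq_zero] at h0
      rw [h0, ← hb ν a, hintegral (fun y => polyP a y * polyP (b ν) y) ((continuous_polyP a).mul (continuous_polyP (b ν)))]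
      simp only [hPa]
    rw [hPa, polyP, ← Finset.sum_coe_sort (multiIdx n k)]
    refine Finset.sum_congr rfl fun ν _ => ?_
    simp only [ν.2, dite_true, Subtype.coe_eta]
    rw [hcoef ν, mul_div_assoc]
    congr 1
    simp only [resc_apply, div_pow, Finset.prod_div_distrib, Finset.prod_pow_eq_pow_sum]
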